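/- arXiv:2206.12081 — 5 statements merged into one kernel-verified Lean document; each statement's English description precedes it below -/
import Mathlib

section
/- Let d, N be positive integers, λ > 0, and let x_1, …, x_N ∈ ℝ^d satisfy ‖x_i‖² ≤ λ for all i. Define Σ_0 = λ·I_d and Σ_i = λ·I_d + Σ_{k=1}^{i} x_k x_kᵀ. Then Σ_{i=1}^{N} x_iᵀ Σ_{i-1}⁻¹ x_i ≤ 2·(ln det(Σ_N) − d·ln λ). -/
open Matrix Finset

/-!
By the matrix determinant lemma, adding `x xᵀ` to a positive definite matrix `S` multiplies its
determinant by `1 + q`, where `q = xᵀ S⁻¹ x`. If `0 ≤ q ≤ 2`, then `q ≤ 2 log (1 + q)`, so each term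
of the sum is at most twice an increment of `log det`, and these increments telescope. Inversion
being antitone in the Loewner order, `q` is at most its value at the initial matrix `λ I`, which is
`‖x‖² / λ ≤ 1`.
-/

theorem le_two_mul_log_one_add {q : ℝ} (hq₀ : 0 ≤ q) (hq₂ : q ≤ 2) :
    q ≤ 2 * Real.log (1 + q) := by
  have hpade : q / 2 ≤ 2 * q / (q + 2) := by
    rw [div_le_div_iff₀ two_pos (by linarith)]
    nlinarith [mul_le_mul_of_nonneg_left hq₂ hq₀]
  linarith [Real.le_log_one_add_of_nonneg hq₀]

theorem dotProduct_inv_smul_one_mulVec {n K : Type*} [Fintype n] [DecidableEq n] [Field K]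
    {c : K} (hc : c ≠ 0) (x : n → K) :
    x ⬝ᵥ ((c • (1 : Matrix n n K))⁻¹ *ᵥ x) = x ⬝ᵥ x / c := by
  have hinv : (c • (1 : Matrix n n K))⁻¹ = c⁻¹ • 1 := inv_eq_left_inv (by simp [smul_smul, hc])
  rw [hinv, smul_mulVec, one_mulVec, dotProduct_smul, smul_eq_mul, inv_mul_eq_div]

section RankOneUpdate

variable {n R : Type*} [Fintype n] [DecidableEq n]

theorem det_add_vecMulVec [CommRing R] {A : Matrix n n R} (hA : IsUnit A.det) (u v : n → R) :
    (A + vecMulVec u v).det = A.det * (1 + v ⬝ᵥ (A⁻¹ *ᵥ u)) := by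
  rw [vecMulVec_eq Unit, det_add_replicateCol_mul_replicateRow hA, Matrix.mul_assoc,
    ← replicateCol_mulVec, det_unique (n := Unit), Matrix.add_apply, one_apply_eq,
    replicateRow_mul_replicateCol_apply]

theorem log_det_add_vecMulVec_self {A : Matrix n n ℝ} (hA : A.PosDef) (x : n → ℝ) :
    Real.log (A + vecMulVec x x).det =
      Real.log A.det + Real.log (1 + x ⬝ᵥ (A⁻¹ *ᵥ x)) := by
  have hq : 0 ≤ x ⬝ᵥ (A⁻¹ *ᵥ x) := hA.inv.posSemidef.dotProduct_mulVec_nonneg x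
  rw [det_add_vecMulVec hA.det_pos.ne'.isUnit, Real.log_mul hA.det_pos.ne' (by positivity)]

end RankOneUpdate

section LoewnerOrder

variable {n : Type*} [Fintype n] [DecidableEq n]

/- Both Schur complements of the block matrix `[[A + B, 1], [1, A⁻¹]]` decide whether it is positive
semidefinite: one is `B`, the other is `A⁻¹ - (A + B)⁻¹`. -/
theorem posSemidef_inv_sub_inv_add {K : Type*} [Field K] [PartialOrder K] [StarRing K]
    [StarOrderedRing K] {A B : Matrix n n K} (hA : A.PosDef) (hB : B.PosSemidef) :
    (A⁻¹ - (A + B)⁻¹).PosSemidef := by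
  have hAB : (A + B).PosDef := hA.add_posSemidef hB
  let _ : Invertible (A + B) := hAB.isUnit.invertible
  let _ : Invertible A⁻¹ := hA.inv.isUnit.invertible
  have hblock : (fromBlocks (A + B) 1 1ᴴ A⁻¹).PosSemidef := by
    rw [PosDef.fromBlocks₂₂ _ _ hA.inv,
      nonsing_inv_nonsing_inv A ((isUnit_iff_isUnit_det A).mp hA.isUnit)]
    simpa using hB
  simpa using (PosDef.fromBlocks₁₁ _ _ hAB).mp hblock

theorem dotProduct_inv_add_mulVec_le {A B : Matrix n n ℝ} (hA : A.PosDef) (hB : B.PosSemidef)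
    (x : n → ℝ) : x ⬝ᵥ ((A + B)⁻¹ *ᵥ x) ≤ x ⬝ᵥ (A⁻¹ *ᵥ x) := by
  have hdiff : 0 ≤ x ⬝ᵥ ((A⁻¹ - (A + B)⁻¹) *ᵥ x) :=
    (posSemidef_inv_sub_inv_add hA hB).dotProduct_mulVec_nonneg x
  rwa [sub_mulVec, dotProduct_sub, sub_nonneg] at hdiff

end LoewnerOrder

section DesignMatrix

variable {n : Type*}

/-- The design matrix `Σ_i = A + ∑_{k < i} x_k x_kᵀ` with regularizer `A`. Vectors are indexed from
`0`, so `designMatrix A x i` involves exactly the first `i` of them. -/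
def designMatrix (A : Matrix n n ℝ) (x : ℕ → n → ℝ) (i : ℕ) : Matrix n n ℝ :=
  A + ∑ k ∈ range i, vecMulVec (x k) (x k)

theorem designMatrix_zero (A : Matrix n n ℝ) (x : ℕ → n → ℝ) : designMatrix A x 0 = A := by
  simp [designMatrix]

theorem designMatrix_succ (A : Matrix n n ℝ) (x : ℕ → n → ℝ) (i : ℕ) :
    designMatrix A x (i + 1) = designMatrix A x i + vecMulVec (x i) (x i) := by
  rw [designMatrix, designMatrix, sum_range_succ, add_assoc]

theorem posSemidef_sum_vecMulVec_self [Finite n] {ι : Type*} (s : Finset ι) (x : ι → n → ℝ) :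
    (∑ k ∈ s, vecMulVec (x k) (x k)).PosSemidef :=
  posSemidef_sum s fun k _ => posSemidef_vecMulVec_self_star (x k)

theorem posDef_designMatrix [Finite n] {A : Matrix n n ℝ} (hA : A.PosDef) (x : ℕ → n → ℝ)
    (i : ℕ) : (designMatrix A x i).PosDef :=
  hA.add_posSemidef (posSemidef_sum_vecMulVec_self (range i) x)

variable [Fintype n] [DecidableEq n]

theorem dotProduct_inv_designMatrix_mulVec_le {A : Matrix n n ℝ} (hA : A.PosDef)
    (x : ℕ → n → ℝ) (i : ℕ) (y : n → ℝ) :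
    y ⬝ᵥ ((designMatrix A x i)⁻¹ *ᵥ y) ≤ y ⬝ᵥ (A⁻¹ *ᵥ y) :=
  dotProduct_inv_add_mulVec_le hA (posSemidef_sum_vecMulVec_self (range i) x) y

theorem elliptical_potential_general {A : Matrix n n ℝ} (hA : A.PosDef) (x : ℕ → n → ℝ) (N : ℕ)
    (hx : ∀ i < N, x i ⬝ᵥ (A⁻¹ *ᵥ x i) ≤ 2) :
    ∑ i ∈ range N, x i ⬝ᵥ ((designMatrix A x i)⁻¹ *ᵥ x i) ≤
      2 * (Real.log (designMatrix A x N).det - Real.log A.det) := by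
  have hstep : ∀ i ∈ range N, x i ⬝ᵥ ((designMatrix A x i)⁻¹ *ᵥ x i) ≤
      2 * (Real.log (designMatrix A x (i + 1)).det - Real.log (designMatrix A x i).det) := by
    intro i hi
    have hS : (designMatrix A x i).PosDef := posDef_designMatrix hA x i
    rw [designMatrix_succ, log_det_add_vecMulVec_self hS, add_sub_cancel_left]
    exact le_two_mul_log_one_add (hS.inv.posSemidef.dotProduct_mulVec_nonneg (x i))
      ((dotProduct_inv_designMatrix_mulVec_le hA x i (x i)).trans (hx i (mem_range.mp hi)))
  calc ∑ i ∈ range N, x i ⬝ᵥ ((designMatrix A x i)⁻¹ *ᵥ x i)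
    _ ≤ ∑ i ∈ range N, 2 * (Real.log (designMatrix A x (i + 1)).det -
          Real.log (designMatrix A x i).det) := sum_le_sum hstep
    _ = 2 * (Real.log (designMatrix A x N).det - Real.log A.det) := by
      rw [← mul_sum, sum_range_sub fun i => Real.log (designMatrix A x i).det, designMatrix_zero]

end DesignMatrix

/-- Elliptical potential bound: if `‖x_i‖² ≤ λ` for all `i` and
`Σ_i = λ I + ∑_{k<i} x_k x_kᵀ`, then
`∑_{i<N} x_iᵀ Σ_i⁻¹ x_i ≤ 2 (ln det Σ_N − d ln λ)`. -/
theorem elliptical_potential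
    (d N : ℕ) (hd : 0 < d) (hN : 0 < N) (lam : ℝ) (hlam : 0 < lam)
    (x : ℕ → Fin d → ℝ) (hx : ∀ i < N, x i ⬝ᵥ x i ≤ lam)
    (Sig : ℕ → Matrix (Fin d) (Fin d) ℝ)
    (hSig : ∀ i, Sig i = lam • (1 : Matrix (Fin d) (Fin d) ℝ) +
      ∑ k ∈ Finset.range i, vecMulVec (x k) (x k)) :
    ∑ i ∈ Finset.range N, x i ⬝ᵥ ((Sig i)⁻¹ *ᵥ x i) ≤
      2 * (Real.log (Sig N).det - d * Real.log lam) := by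
  obtain rfl : Sig = designMatrix (lam • 1) x := funext hSig
  have hquad : ∀ i < N, x i ⬝ᵥ ((lam • 1 : Matrix (Fin d) (Fin d) ℝ)⁻¹ *ᵥ x i) ≤ 2 := by
    intro i hi
    rw [dotProduct_inv_smul_one_mulVec hlam.ne']
    exact ((div_le_one hlam).mpr (hx i hi)).trans one_le_two
  simpa using elliptical_potential_general (PosDef.one.smul hlam) x N hquad
end

section
/- Let d, N be positive integers, λ > 0, B ≥ 0, and let x_1, …, x_N ∈ ℝ^d satisfy ‖x_i‖ ≤ B for all i. Then ln det(λ·I_d + Σ_{i=1}^{N} x_i x_iᵀ) − d·ln λ ≤ d·ln(1 + N·B²/(d·λ)). -/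
open Matrix Finset

theorem prod_le_arith_mean_pow_card {ι : Type*} {s : Finset ι} (hs : s.Nonempty) {z : ι → ℝ}
    (hz : ∀ i ∈ s, 0 ≤ z i) : ∏ i ∈ s, z i ≤ ((∑ i ∈ s, z i) / #s) ^ #s := by
  have hcard : (0 : ℝ) < #s := by exact_mod_cast hs.card_pos
  have hgm : (∏ i ∈ s, z i) ^ (#s : ℝ)⁻¹ ≤ (∑ i ∈ s, z i) / #s := by
    simpa using Real.geom_mean_le_arith_mean s (fun _ => 1) z (by simp) (by simpa using hcard) hz
  have hmean : 0 ≤ (∑ i ∈ s, z i) / #s := div_nonneg (sum_nonneg hz) hcard.le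
  rwa [Real.rpow_inv_le_iff_of_pos (prod_nonneg hz) hmean hcard, Real.rpow_natCast] at hgm

section LogDet

open scoped ComplexOrder

variable {𝕜 n : Type*} [RCLike 𝕜] [Fintype n]

theorem re_trace_sum_vecMulVec_star {ι : Type*} (s : Finset ι) (x : ι → EuclideanSpace 𝕜 n) :
    RCLike.re (∑ i ∈ s, vecMulVec (x i) (star (x i))).trace = ∑ i ∈ s, ‖x i‖ ^ 2 := by
  simp only [trace_sum, trace_vecMulVec, map_sum, ← EuclideanSpace.inner_eq_star_dotProduct,
    inner_self_eq_norm_sq]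

variable [DecidableEq n] [Nonempty n]

theorem re_det_le_re_trace_div_card_pow {A : Matrix n n 𝕜} (hA : A.PosSemidef) :
    RCLike.re A.det ≤ (RCLike.re A.trace / Fintype.card n) ^ Fintype.card n := by
  have hdet : RCLike.re A.det = ∏ i, hA.isHermitian.eigenvalues i := by
    rw [hA.isHermitian.det_eq_prod_eigenvalues, ← RCLike.ofReal_prod, RCLike.ofReal_re]
  have htrace : RCLike.re A.trace = ∑ i, hA.isHermitian.eigenvalues i := by
    rw [hA.isHermitian.trace_eq_sum_eigenvalues, ← RCLike.ofReal_sum, RCLike.ofReal_re]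
  rw [hdet, htrace]
  exact prod_le_arith_mean_pow_card univ_nonempty fun i _ => hA.eigenvalues_nonneg i

theorem log_re_det_le_card_mul_log_re_trace_div_card {A : Matrix n n 𝕜} (hA : A.PosDef) :
    Real.log (RCLike.re A.det) ≤
      Fintype.card n * Real.log (RCLike.re A.trace / Fintype.card n) := by
  have hdet : 0 < RCLike.re A.det := (RCLike.pos_iff.mp hA.det_pos).1
  rw [← Real.log_pow]
  exact Real.log_le_log hdet (re_det_le_re_trace_div_card_pow hA.posSemidef)

theorem log_re_det_smul_one_add_sub_le {lam : ℝ} (hlam : 0 < lam) {S : Matrix n n 𝕜}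
    (hS : S.PosSemidef) :
    Real.log (RCLike.re (lam • (1 : Matrix n n 𝕜) + S).det) - Fintype.card n * Real.log lam ≤
      Fintype.card n * Real.log (1 + RCLike.re S.trace / (Fintype.card n * lam)) := by
  have htrace : 0 ≤ RCLike.re S.trace := (RCLike.nonneg_iff.mp hS.trace_nonneg).1
  have hmean : RCLike.re (lam • (1 : Matrix n n 𝕜) + S).trace / Fintype.card n =
      lam * (1 + RCLike.re S.trace / (Fintype.card n * lam)) := by
    rw [trace_add, trace_smul, trace_one, map_add, RCLike.smul_re, RCLike.natCast_re]
    field_simp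
  have hA : (lam • (1 : Matrix n n 𝕜) + S).PosDef := (PosDef.one.smul hlam).add_posSemidef hS
  have hlog := log_re_det_le_card_mul_log_re_trace_div_card hA
  rw [hmean, Real.log_mul hlam.ne' (by positivity), mul_add] at hlog
  exact sub_le_iff_le_add'.mpr hlog

theorem logdet_bound_general {ι : Type*} (s : Finset ι) {lam B : ℝ} (hlam : 0 < lam)
    (x : ι → EuclideanSpace 𝕜 n) (hx : ∀ i ∈ s, ‖x i‖ ≤ B) :
    Real.log (RCLike.re (lam • (1 : Matrix n n 𝕜) +
        ∑ i ∈ s, vecMulVec (x i) (star (x i))).det) - Fintype.card n * Real.log lam ≤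
      Fintype.card n * Real.log (1 + #s * B ^ 2 / (Fintype.card n * lam)) := by
  have hS : (∑ i ∈ s, vecMulVec (x i) (star (x i))).PosSemidef :=
    posSemidef_sum s fun i _ => posSemidef_vecMulVec_self_star (x i).ofLp
  have hsum : ∑ i ∈ s, ‖x i‖ ^ 2 ≤ #s * B ^ 2 := by
    rw [← nsmul_eq_mul]
    exact sum_le_card_nsmul s _ _ fun i hi => pow_le_pow_left₀ (norm_nonneg _) (hx i hi) 2
  refine (log_re_det_smul_one_add_sub_le hlam hS).trans ?_
  rw [re_trace_sum_vecMulVec_star]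
  gcongr

end LogDet

/-- Log-determinant bound (second inequality of the potential function lemma):
if `‖x_i‖ ≤ B`, then `ln det(λ I + ∑_{i<N} x_i x_iᵀ) − d ln λ ≤ d ln(1 + N B² / (d λ))`. -/
theorem logdet_bound
    (d N : ℕ) (hd : 0 < d) (hN : 0 < N) (lam B : ℝ) (hlam : 0 < lam) (hB : 0 ≤ B)
    (x : ℕ → Fin d → ℝ) (hx : ∀ i < N, Real.sqrt (x i ⬝ᵥ x i) ≤ B) :
    Real.log (lam • (1 : Matrix (Fin d) (Fin d) ℝ) +
        ∑ i ∈ Finset.range N, vecMulVec (x i) (x i)).det - d * Real.log lam ≤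
      d * Real.log (1 + N * B ^ 2 / (d * lam)) := by
  have : Nonempty (Fin d) := ⟨⟨0, hd⟩⟩
  simpa using logdet_bound_general (range N) hlam (fun i => WithLp.toLp 2 (x i))
    (by simpa [EuclideanSpace.norm_eq, dotProduct, sq] using hx)
end

section
/- Let A and B be real symmetric positive semidefinite d×d matrices. Then det(I_d + A + B) ≤ det(I_d + A)·det(I_d + B). -/
open Matrix

/-!
Write `B = Cᴴ * C`. The matrix determinant lemma turns adding `B` to a positive definite `P` into
multiplying the determinant by `det (1 + C * P⁻¹ * Cᴴ)`. Enlarging `P` to `P + A` shrinks its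
inverse, hence also this factor.
-/

section LoewnerOrder

open scoped ComplexOrder MatrixOrder

variable {𝕜 n : Type*} [RCLike 𝕜] [Fintype n] [DecidableEq n] {A B P : Matrix n n 𝕜}

lemma det_one_add_eq_prod_one_add_eigenvalues (hA : A.IsHermitian) :
    (1 + A).det = ∏ i, (1 + (hA.eigenvalues i : 𝕜)) := by
  conv_lhs => rw [hA.spectral_theorem, Unitary.conjStarAlgAut_apply, Matrix.mul_assoc,
    det_one_add_mul_comm, Matrix.mul_assoc, Unitary.coe_star_mul_self, Matrix.mul_one,
    ← diagonal_one, diagonal_add, det_diagonal]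
  rfl

lemma one_le_det_one_add (hA : A.PosSemidef) : 1 ≤ (1 + A).det := by
  rw [det_one_add_eq_prod_one_add_eigenvalues hA.isHermitian]
  refine Finset.prod_induction _ (1 ≤ ·) (fun _ _ ↦ one_le_mul_of_one_le_of_one_le) le_rfl
    fun i _ ↦ ?_
  exact le_add_of_nonneg_right (RCLike.ofReal_nonneg.mpr (hA.eigenvalues_nonneg i))

lemma det_le_det_of_posDef_of_le (hA : A.PosDef) (hAB : A ≤ B) : A.det ≤ B.det := by
  obtain ⟨C, hC⟩ := CStarAlgebra.nonneg_iff_eq_star_mul_self.mp (sub_nonneg.mpr hAB)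
  have hdet : B.det = A.det * (1 + C * A⁻¹ * Cᴴ).det := by
    rw [← det_add_mul Cᴴ C hA.det_pos.ne'.isUnit, ← star_eq_conjTranspose, ← hC,
      add_sub_cancel]
  rw [hdet]
  exact le_mul_of_one_le_right hA.det_pos.le
    (one_le_det_one_add (hA.inv.posSemidef.mul_mul_conjTranspose_same C))

lemma inv_le_inv_of_posDef_of_le (hA : A.PosDef) (hAB : A ≤ B) : B⁻¹ ≤ A⁻¹ := by
  have hB : B.PosDef := by simpa using hA.add_posSemidef (le_iff.mp hAB)
  let := hB.isUnit.invertible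
  let := hA.inv.isUnit.invertible
  -- `B - A` and `A⁻¹ - B⁻¹` are the two Schur complements of this block matrix.
  have hblock : (fromBlocks B 1 1ᴴ A⁻¹).PosSemidef := by
    rw [hA.inv.fromBlocks₂₂, nonsing_inv_nonsing_inv A hA.det_pos.ne'.isUnit]
    simpa using le_iff.mp hAB
  simpa [le_iff] using (hB.fromBlocks₁₁ 1 A⁻¹).mp hblock

lemma det_add_add_mul_det_le_of_posDef (hP : P.PosDef) (hA : A.PosSemidef) (hB : B.PosSemidef) :
    (P + A + B).det * P.det ≤ (P + A).det * (P + B).det := by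
  obtain ⟨C, rfl⟩ := CStarAlgebra.nonneg_iff_eq_star_mul_self.mp hB.nonneg
  have hPA : (P + A).PosDef := hP.add_posSemidef hA
  have hinv : (P + A)⁻¹ ≤ P⁻¹ :=
    inv_le_inv_of_posDef_of_le hP (le_add_of_nonneg_right hA.nonneg)
  have hfactor : (1 + C * (P + A)⁻¹ * Cᴴ).det ≤ (1 + C * P⁻¹ * Cᴴ).det :=
    det_le_det_of_posDef_of_le
      (PosDef.one.add_posSemidef (hPA.inv.posSemidef.mul_mul_conjTranspose_same C))
      (add_le_add_right (star_right_conjugate_le_conjugate hinv C) 1)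
  calc (P + A + Cᴴ * C).det * P.det
      = (P + A).det * P.det * (1 + C * (P + A)⁻¹ * Cᴴ).det := by
        rw [det_add_mul _ _ hPA.det_pos.ne'.isUnit, mul_right_comm]
    _ ≤ (P + A).det * P.det * (1 + C * P⁻¹ * Cᴴ).det :=
        mul_le_mul_of_nonneg_left hfactor (mul_pos hPA.det_pos hP.det_pos).le
    _ = (P + A).det * (P + Cᴴ * C).det := by
        rw [det_add_mul _ _ hP.det_pos.ne'.isUnit, mul_assoc]

theorem det_one_add_add_le_general (hP : P.PosSemidef) (hA : A.PosSemidef) (hB : B.PosSemidef) :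
    (P + A + B).det * P.det ≤ (P + A).det * (P + B).det := by
  by_cases hdet : P.det = 0
  · rw [hdet, mul_zero]
    exact mul_nonneg (hP.add hA).det_nonneg (hP.add hB).det_nonneg
  · exact det_add_add_mul_det_le_of_posDef (hP.posDef_iff_det_ne_zero.mpr hdet) hA hB

end LoewnerOrder

/-- Subadditivity of the log-determinant over PSD summands:
`det(I + A + B) ≤ det(I + A) det(I + B)` for real symmetric PSD matrices `A`, `B`. -/
theorem det_one_add_add_le
    {d : ℕ} (A B : Matrix (Fin d) (Fin d) ℝ)
    (hA : A.PosSemidef) (hB : B.PosSemidef) :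
    (1 + A + B).det ≤ (1 + A).det * (1 + B).det := by
  simpa using det_one_add_add_le_general .one hA hB
end

section
/- Let λ > 0, Θ ≥ 0, E ≥ 0, ε ≥ 0. Let x̂_1, …, x̂_N ∈ ℝ^d and x_1, …, x_N ∈ ℝ^d, let θ* ∈ ℝ^d with ‖θ*‖ ≤ Θ, let z_1, …, z_N ∈ ℝ, and set y_i = ⟨θ*, x_i⟩ + z_i, Σ = λ·I_d + Σ_{i=1}^{N} x̂_i x̂_iᵀ, and θ̂ = Σ⁻¹ Σ_{i=1}^{N} y_i·x̂_i. Suppose |⟨x_i − x̂_i, θ*⟩ + z_i| ≤ E for every i. Then for any u ∈ ℝ^d with √(uᵀ Σ⁻¹ u) ≤ ε: |⟨θ̂ − θ*, u⟩| ≤ √λ·Θ·ε + E·√N·ε. -/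
open Matrix Finset

/-! Write `X` for the matrix with rows `x̂_i`, put `v = Σ⁻¹ u`, and let `r = y - X θ*` be the
residual of the true parameter, whose entries are the perturbations `⟨x_i - x̂_i, θ*⟩ + z_i`; thus
`‖r‖ ≤ E √N`. The normal equations `Σ (θ̂ - θ*) = Xᵀ r - λ θ*` and the symmetry of `Σ` give
`⟨θ̂ - θ*, u⟩ = ⟨r, X v⟩ - λ ⟨θ*, v⟩`. Since `uᵀ Σ⁻¹ u = λ ‖v‖² + ‖X v‖²`, both `‖X v‖` and
`√λ ‖v‖` are at most `√(uᵀ Σ⁻¹ u)`, and Cauchy–Schwarz bounds each of the two terms. -/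

section NormalEquations

variable {ι n R : Type*} [Fintype ι] [DecidableEq n] [CommRing R]

/-- The regularized Gram matrix `Σ = λ I + Xᵀ X` of ridge regression; the rows of the design matrix
`X` are the feature vectors of the samples. -/
def ridgeGram (lam : R) (X : Matrix ι n R) : Matrix n n R :=
  lam • (1 : Matrix n n R) + Xᵀ * X

theorem ridgeGram_eq_add_sum_vecMulVec (lam : R) (X : Matrix ι n R) :
    ridgeGram lam X = lam • (1 : Matrix n n R) + ∑ i, vecMulVec (X i) (X i) := by
  ext j k
  simp [ridgeGram, mul_apply, Matrix.sum_apply, vecMulVec_apply]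

variable [Fintype n]

/-- The ridge regression estimator `θ̂ = Σ⁻¹ Xᵀ y` for the responses `y`. The matrix inverse, and
hence the estimator, is `0` when `Σ` is not invertible. -/
noncomputable def ridgeEstimator (lam : R) (X : Matrix ι n R) (y : ι → R) : n → R :=
  (ridgeGram lam X)⁻¹ *ᵥ (Xᵀ *ᵥ y)

theorem ridgeEstimator_eq_inv_mulVec_sum (lam : R) (X : Matrix ι n R) (y : ι → R) :
    ridgeEstimator lam X y = (ridgeGram lam X)⁻¹ *ᵥ ∑ i, y i • X i := by
  rw [ridgeEstimator, mulVec_transpose, vecMul_eq_sum]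

theorem ridgeGram_mulVec (lam : R) (X : Matrix ι n R) (v : n → R) :
    ridgeGram lam X *ᵥ v = lam • v + Xᵀ *ᵥ (X *ᵥ v) := by
  rw [ridgeGram, add_mulVec, smul_mulVec, one_mulVec, mulVec_mulVec]

theorem dotProduct_ridgeGram_mulVec (lam : R) (X : Matrix ι n R) (v w : n → R) :
    v ⬝ᵥ (ridgeGram lam X *ᵥ w) = lam * (v ⬝ᵥ w) + (X *ᵥ v) ⬝ᵥ (X *ᵥ w) := by
  rw [ridgeGram_mulVec, dotProduct_add, dotProduct_smul, smul_eq_mul, dotProduct_mulVec,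
    vecMul_transpose]

theorem dotProduct_ridgeGram_mulVec_comm (lam : R) (X : Matrix ι n R) (v w : n → R) :
    v ⬝ᵥ (ridgeGram lam X *ᵥ w) = w ⬝ᵥ (ridgeGram lam X *ᵥ v) := by
  rw [dotProduct_ridgeGram_mulVec, dotProduct_ridgeGram_mulVec, dotProduct_comm v,
    dotProduct_comm (X *ᵥ v)]

variable {lam : R} {X : Matrix ι n R}

theorem ridgeGram_mulVec_inv_mulVec (hX : IsUnit (ridgeGram lam X)) (v : n → R) :
    ridgeGram lam X *ᵥ ((ridgeGram lam X)⁻¹ *ᵥ v) = v := by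
  rw [mulVec_mulVec, mul_nonsing_inv _ ((isUnit_iff_isUnit_det _).1 hX), one_mulVec]

theorem ridgeGram_mulVec_ridgeEstimator_sub (hX : IsUnit (ridgeGram lam X)) (y : ι → R)
    (θ : n → R) :
    ridgeGram lam X *ᵥ (ridgeEstimator lam X y - θ) = Xᵀ *ᵥ (y - X *ᵥ θ) - lam • θ := by
  rw [mulVec_sub, ridgeEstimator, ridgeGram_mulVec_inv_mulVec hX, ridgeGram_mulVec, mulVec_sub]
  abel

theorem ridgeEstimator_sub_dotProduct (hX : IsUnit (ridgeGram lam X)) (y : ι → R) (θ u : n → R) :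
    (ridgeEstimator lam X y - θ) ⬝ᵥ u =
      (y - X *ᵥ θ) ⬝ᵥ (X *ᵥ ((ridgeGram lam X)⁻¹ *ᵥ u)) -
        lam * (θ ⬝ᵥ ((ridgeGram lam X)⁻¹ *ᵥ u)) := by
  set v := (ridgeGram lam X)⁻¹ *ᵥ u
  calc (ridgeEstimator lam X y - θ) ⬝ᵥ u
      = (ridgeEstimator lam X y - θ) ⬝ᵥ (ridgeGram lam X *ᵥ v) := by
        rw [ridgeGram_mulVec_inv_mulVec hX]
    _ = v ⬝ᵥ (Xᵀ *ᵥ (y - X *ᵥ θ) - lam • θ) := by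
        rw [dotProduct_ridgeGram_mulVec_comm, ridgeGram_mulVec_ridgeEstimator_sub hX]
    _ = (y - X *ᵥ θ) ⬝ᵥ (X *ᵥ v) - lam * (θ ⬝ᵥ v) := by
        rw [dotProduct_sub, dotProduct_smul, smul_eq_mul, dotProduct_comm v θ,
          dotProduct_transpose_mulVec]

theorem dotProduct_ridgeGram_inv_mulVec (hX : IsUnit (ridgeGram lam X)) (u : n → R) :
    u ⬝ᵥ ((ridgeGram lam X)⁻¹ *ᵥ u) =
      lam * (((ridgeGram lam X)⁻¹ *ᵥ u) ⬝ᵥ ((ridgeGram lam X)⁻¹ *ᵥ u)) +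
        (X *ᵥ ((ridgeGram lam X)⁻¹ *ᵥ u)) ⬝ᵥ (X *ᵥ ((ridgeGram lam X)⁻¹ *ᵥ u)) := by
  rw [← dotProduct_ridgeGram_mulVec, ridgeGram_mulVec_inv_mulVec hX, dotProduct_comm]

end NormalEquations

section RealVectors

variable {ι : Type*} [Fintype ι]

theorem abs_dotProduct_le_sqrt_mul_sqrt (v w : ι → ℝ) : |v ⬝ᵥ w| ≤ √(v ⬝ᵥ v) * √(w ⬝ᵥ w) := by
  rw [← Real.sqrt_mul (x := v ⬝ᵥ v) (dotProduct_self_star_nonneg v)]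
  apply Real.abs_le_sqrt
  simpa only [dotProduct, sq] using sum_mul_sq_le_sq_mul_sq univ v w

theorem sqrt_dotProduct_self_le_of_forall_abs_le {v : ι → ℝ} {E : ℝ} (hv : ∀ i, |v i| ≤ E) :
    √(v ⬝ᵥ v) ≤ E * √(Fintype.card ι) := by
  rcases isEmpty_or_nonempty ι with _ | ⟨⟨i⟩⟩
  · simp
  have hE : 0 ≤ E := (abs_nonneg _).trans (hv i)
  calc √(v ⬝ᵥ v) ≤ √(∑ _i : ι, E ^ 2) := by
        refine Real.sqrt_le_sqrt (sum_le_sum fun j _ ↦ ?_)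
        simpa only [← sq, sq_abs] using pow_le_pow_left₀ (abs_nonneg _) (hv j) 2
    _ = E * √(Fintype.card ι) := by
        rw [sum_const, card_univ, nsmul_eq_mul, mul_comm, Real.sqrt_mul (sq_nonneg E),
          Real.sqrt_sq hE]

end RealVectors

section ErrorBound

variable {ι n : Type*} [Fintype ι] [DecidableEq n] {lam : ℝ}

theorem posDef_ridgeGram [Finite n] (hlam : 0 < lam) (X : Matrix ι n ℝ) :
    (ridgeGram lam X).PosDef :=
  (PosDef.one.smul hlam).add_posSemidef (posSemidef_conjTranspose_mul_self X)

variable [Fintype n] {X : Matrix ι n ℝ}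

theorem abs_ridgeEstimator_sub_dotProduct_le (hlam : 0 ≤ lam) (hX : IsUnit (ridgeGram lam X))
    (y : ι → ℝ) (θ u : n → ℝ) :
    |(ridgeEstimator lam X y - θ) ⬝ᵥ u| ≤
      (√lam * √(θ ⬝ᵥ θ) + √((y - X *ᵥ θ) ⬝ᵥ (y - X *ᵥ θ))) *
        √(u ⬝ᵥ ((ridgeGram lam X)⁻¹ *ᵥ u)) := by
  have herror := ridgeEstimator_sub_dotProduct hX y θ u
  have hnorm := dotProduct_ridgeGram_inv_mulVec hX u
  set v := (ridgeGram lam X)⁻¹ *ᵥ u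
  set r := y - X *ᵥ θ
  have hparam : √lam * √(v ⬝ᵥ v) ≤ √(u ⬝ᵥ v) := by
    rw [← Real.sqrt_mul hlam, hnorm]
    exact Real.sqrt_le_sqrt (le_add_of_nonneg_right (dotProduct_self_star_nonneg (X *ᵥ v)))
  have hfit : √((X *ᵥ v) ⬝ᵥ (X *ᵥ v)) ≤ √(u ⬝ᵥ v) := by
    rw [hnorm]
    exact Real.sqrt_le_sqrt
      (le_add_of_nonneg_left (mul_nonneg hlam (dotProduct_self_star_nonneg v)))
  calc |(ridgeEstimator lam X y - θ) ⬝ᵥ u|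
      ≤ |r ⬝ᵥ (X *ᵥ v)| + |lam * (θ ⬝ᵥ v)| := herror ▸ abs_sub _ _
    _ = |r ⬝ᵥ (X *ᵥ v)| + √lam * (√lam * |θ ⬝ᵥ v|) := by
        rw [abs_mul, abs_of_nonneg hlam, ← mul_assoc, Real.mul_self_sqrt hlam]
    _ ≤ √(r ⬝ᵥ r) * √((X *ᵥ v) ⬝ᵥ (X *ᵥ v)) +
          √lam * (√lam * (√(θ ⬝ᵥ θ) * √(v ⬝ᵥ v))) := by
        gcongr <;> exact abs_dotProduct_le_sqrt_mul_sqrt _ _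
    _ = √(r ⬝ᵥ r) * √((X *ᵥ v) ⬝ᵥ (X *ᵥ v)) +
          √lam * √(θ ⬝ᵥ θ) * (√lam * √(v ⬝ᵥ v)) := by ring
    _ ≤ √(r ⬝ᵥ r) * √(u ⬝ᵥ v) + √lam * √(θ ⬝ᵥ θ) * √(u ⬝ᵥ v) := by gcongr
    _ = (√lam * √(θ ⬝ᵥ θ) + √(r ⬝ᵥ r)) * √(u ⬝ᵥ v) := by ring

/-- The case `lam = 0` is ordinary least squares with a design of full column rank. -/
theorem least_squares_error_bound_general {Θ E ε : ℝ} (hlam : 0 ≤ lam)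
    (hX : IsUnit (ridgeGram lam X)) {θ : n → ℝ} (hθ : √(θ ⬝ᵥ θ) ≤ Θ) {y : ι → ℝ}
    (hy : ∀ i, |y i - X i ⬝ᵥ θ| ≤ E) {u : n → ℝ}
    (hu : √(u ⬝ᵥ ((ridgeGram lam X)⁻¹ *ᵥ u)) ≤ ε) :
    |(ridgeEstimator lam X y - θ) ⬝ᵥ u| ≤ √lam * Θ * ε + E * √(Fintype.card ι) * ε := by
  have hε : 0 ≤ ε := (Real.sqrt_nonneg _).trans hu
  have hresidual : √((y - X *ᵥ θ) ⬝ᵥ (y - X *ᵥ θ)) ≤ E * √(Fintype.card ι) :=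
    sqrt_dotProduct_self_le_of_forall_abs_le hy
  calc |(ridgeEstimator lam X y - θ) ⬝ᵥ u|
      ≤ (√lam * √(θ ⬝ᵥ θ) + √((y - X *ᵥ θ) ⬝ᵥ (y - X *ᵥ θ))) *
          √(u ⬝ᵥ ((ridgeGram lam X)⁻¹ *ᵥ u)) :=
        abs_ridgeEstimator_sub_dotProduct_le hlam hX y θ u
    _ ≤ (√lam * √(θ ⬝ᵥ θ) + √((y - X *ᵥ θ) ⬝ᵥ (y - X *ᵥ θ))) * ε := by gcongr
    _ ≤ (√lam * Θ + E * √(Fintype.card ι)) * ε := by gcongr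
    _ = √lam * Θ * ε + E * √(Fintype.card ι) * ε := add_mul _ _ _

end ErrorBound

/-- Deterministic least-squares error bound: if each response perturbation
`⟨x_i − x̂_i, θ*⟩ + z_i` is bounded by `E`, `‖θ*‖ ≤ Θ`, and the test direction `u`
satisfies `√(uᵀ Σ⁻¹ u) ≤ ε`, then `|⟨θ̂ − θ*, u⟩| ≤ √λ Θ ε + E √N ε`. -/
theorem least_squares_error_bound
    {d N : ℕ} (lam Θ E ε : ℝ) (hlam : 0 < lam) (hΘ : 0 ≤ Θ) (hE : 0 ≤ E) (hε : 0 ≤ ε)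
    (xh x : Fin N → Fin d → ℝ) (θs : Fin d → ℝ)
    (hθs : Real.sqrt (θs ⬝ᵥ θs) ≤ Θ) (z : Fin N → ℝ)
    (y : Fin N → ℝ) (hy : ∀ i, y i = θs ⬝ᵥ x i + z i)
    (Sig : Matrix (Fin d) (Fin d) ℝ)
    (hSig : Sig = lam • (1 : Matrix (Fin d) (Fin d) ℝ) + ∑ i, vecMulVec (xh i) (xh i))
    (θh : Fin d → ℝ) (hθh : θh = Sig⁻¹ *ᵥ (∑ i, y i • xh i))
    (hpert : ∀ i, |(x i - xh i) ⬝ᵥ θs + z i| ≤ E)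
    (u : Fin d → ℝ) (hu : Real.sqrt (u ⬝ᵥ (Sig⁻¹ *ᵥ u)) ≤ ε) :
    |(θh - θs) ⬝ᵥ u| ≤ Real.sqrt lam * Θ * ε + E * Real.sqrt N * ε := by
  obtain rfl : Sig = ridgeGram lam (of xh) :=
    hSig.trans (ridgeGram_eq_add_sum_vecMulVec lam (of xh)).symm
  obtain rfl : θh = ridgeEstimator lam (of xh) y :=
    hθh.trans (ridgeEstimator_eq_inv_mulVec_sum lam (of xh) y).symm
  have hresidual (i : Fin N) : |y i - of xh i ⬝ᵥ θs| ≤ E := by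
    have : y i - of xh i ⬝ᵥ θs = (x i - xh i) ⬝ᵥ θs + z i := by
      rw [hy, sub_dotProduct, dotProduct_comm θs, add_sub_right_comm]
      rfl
    exact this ▸ hpert i
  simpa only [Fintype.card_fin] using
    least_squares_error_bound_general hlam.le (posDef_ridgeGram hlam _).isUnit hθs hresidual hu
end

section
/- Let n be a positive integer, let w ∈ ℝⁿ, and let α ∈ ℝ. Define φ : ℝⁿ → ℝ^{(n+1)×(n+1)} by φ(x) = (1, x)·(1, x)ᵀ, the outer product of the vector (1, x) ∈ ℝ^{n+1} with itself. Then there exists a bilinear form B : ℝ^{(n+1)×(n+1)} × ℝ^{(n+1)×(n+1)} → ℝ such that for all v, u ∈ ℝⁿ: B(φ(v), φ(u)) = (⟨v, u⟩ + 2α)·⟨v, w⟩. -/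
/-!
Both factors of `(⟨v, u⟩ + 2α)⟨v, w⟩` are affine in `v` and in `u` separately, so each has the form
`x ⬝ᵥ P *ᵥ y` with `x = (1, v)`, `y = (1, u)` and a constant matrix `P`. A product of two such
expressions is bilinear in the rank-one matrices `x xᵀ` and `y yᵀ`, because
`tr (Pᵀ (x xᵀ) Q (y yᵀ)) = (xᵀ P y) (xᵀ Q y)`.
-/

open Matrix

section SandwichTrace

variable {R m m' k k' : Type*} [CommSemiring R] [Fintype m] [Fintype m'] [Fintype k] [Fintype k']

/-- The bilinear form `(X, Y) ↦ tr (Pᵀ X Q Y)` on matrices, whose values on rank-one matrices are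
products of the values of the bilinear forms with matrices `P` and `Q`. The two slots may hold
rectangular matrices of different shapes. -/
def sandwichTrace (P : Matrix m k R) (Q : Matrix m' k' R) :
    Matrix m m' R →ₗ[R] Matrix k' k R →ₗ[R] R :=
  LinearMap.mk₂ R (fun X Y ↦ trace (Pᵀ * X * Q * Y))
    (fun X X' Y ↦ by simp only [Matrix.mul_add, Matrix.add_mul, trace_add])
    (fun c X Y ↦ by simp only [Matrix.mul_smul, Matrix.smul_mul, trace_smul])
    (fun X Y Y' ↦ by simp only [Matrix.mul_add, trace_add])
    (fun c X Y ↦ by simp only [Matrix.mul_smul, trace_smul])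

theorem sandwichTrace_apply (P : Matrix m k R) (Q : Matrix m' k' R)
    (X : Matrix m m' R) (Y : Matrix k' k R) :
    sandwichTrace P Q X Y = trace (Pᵀ * X * Q * Y) :=
  rfl

theorem sandwichTrace_vecMulVec (P : Matrix m k R) (Q : Matrix m' k' R)
    (x : m → R) (x' : m' → R) (y' : k' → R) (y : k → R) :
    sandwichTrace P Q (vecMulVec x x') (vecMulVec y' y) =
      (x ⬝ᵥ P *ᵥ y) * (x' ⬝ᵥ Q *ᵥ y') := by
  calc sandwichTrace P Q (vecMulVec x x') (vecMulVec y' y)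
      = trace (vecMulVec (Pᵀ *ᵥ x) (x' ᵥ* Q) * vecMulVec y' y) := by
        rw [sandwichTrace_apply, mul_vecMulVec Pᵀ, vecMulVec_mul _ _ Q]
    _ = (x' ᵥ* Q ⬝ᵥ y') * (Pᵀ *ᵥ x ⬝ᵥ y) := by
        rw [vecMulVec_mul_vecMulVec, trace_vecMulVec, dotProduct_smul, smul_eq_mul]
    _ = (x ⬝ᵥ P *ᵥ y) * (x' ⬝ᵥ Q *ᵥ y') := by
        rw [mulVec_transpose, ← dotProduct_mulVec, ← dotProduct_mulVec, mul_comm]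

end SandwichTrace

section BorderedMatrix

variable {R : Type*} {m k : ℕ}

/-- The block matrix `[[a, r], [c, A]]` indexed by `Fin`, with corner `a`, first row `r` and first
column `c`. It encodes the biaffine function `(v, u) ↦ a + r ⬝ᵥ u + v ⬝ᵥ c + v ⬝ᵥ A *ᵥ u`. -/
def borderedMatrix (a : R) (r : Fin k → R) (c : Fin m → R) (A : Matrix (Fin m) (Fin k) R) :
    Matrix (Fin (m + 1)) (Fin (k + 1)) R :=
  of (vecCons (vecCons a r) fun i ↦ vecCons (c i) (A i))

variable [CommSemiring R]

theorem borderedMatrix_mulVec_cons (a : R) (r : Fin k → R) (c : Fin m → R)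
    (A : Matrix (Fin m) (Fin k) R) (t : R) (u : Fin k → R) :
    borderedMatrix a r c A *ᵥ vecCons t u = vecCons (a * t + r ⬝ᵥ u) (t • c + A *ᵥ u) := by
  rw [borderedMatrix, cons_mulVec, cons_dotProduct_cons]
  congr 1
  ext i
  simp [mulVec, mul_comm]

theorem cons_one_dotProduct_borderedMatrix_mulVec_cons_one (a : R) (r : Fin k → R)
    (c : Fin m → R) (A : Matrix (Fin m) (Fin k) R) (v : Fin m → R) (u : Fin k → R) :
    vecCons 1 v ⬝ᵥ borderedMatrix a r c A *ᵥ vecCons 1 u =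
      a + r ⬝ᵥ u + v ⬝ᵥ c + v ⬝ᵥ A *ᵥ u := by
  rw [borderedMatrix_mulVec_cons, cons_dotProduct_cons, one_smul, dotProduct_add, mul_one,
    one_mul, add_assoc (a + r ⬝ᵥ u)]

end BorderedMatrix

theorem tensorization_bilinear_general {R : Type*} [CommSemiring R] {m k : ℕ}
    (a a' : R) (r r' : Fin k → R) (c c' : Fin m → R) (A A' : Matrix (Fin m) (Fin k) R) :
    ∃ B : Matrix (Fin (m + 1)) (Fin (m + 1)) R →ₗ[R]
        Matrix (Fin (k + 1)) (Fin (k + 1)) R →ₗ[R] R,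
      ∀ (v : Fin m → R) (u : Fin k → R),
        B (vecMulVec (vecCons 1 v) (vecCons 1 v)) (vecMulVec (vecCons 1 u) (vecCons 1 u)) =
          (a + r ⬝ᵥ u + v ⬝ᵥ c + v ⬝ᵥ A *ᵥ u) * (a' + r' ⬝ᵥ u + v ⬝ᵥ c' + v ⬝ᵥ A' *ᵥ u) := by
  refine ⟨sandwichTrace (borderedMatrix a r c A) (borderedMatrix a' r' c' A'), fun v u ↦ ?_⟩
  simp only [sandwichTrace_vecMulVec, cons_one_dotProduct_borderedMatrix_mulVec_cons_one]

/-- Tensorization step of the gap lower bound: for `φ(x) = (1,x)(1,x)ᵀ` there is a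
bilinear form `B` on `ℝ^{(n+1)×(n+1)}` with
`B(φ(v), φ(u)) = (⟨v,u⟩ + 2α)·⟨v,w⟩` for all `v, u ∈ ℝⁿ`. -/
theorem tensorization_bilinear
    (n : ℕ) (hn : 0 < n) (w : Fin n → ℝ) (α : ℝ) :
    ∃ B : Matrix (Fin (n + 1)) (Fin (n + 1)) ℝ →ₗ[ℝ]
        Matrix (Fin (n + 1)) (Fin (n + 1)) ℝ →ₗ[ℝ] ℝ,
      ∀ v u : Fin n → ℝ,
        B (vecMulVec (Fin.cons 1 v) (Fin.cons 1 v))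
            (vecMulVec (Fin.cons 1 u) (Fin.cons 1 u)) =
          (v ⬝ᵥ u + 2 * α) * (v ⬝ᵥ w) := by
  simpa [vecCons, add_comm] using
    tensorization_bilinear_general (k := n) (a := 2 * α) (r := 0) (c := 0) (A := 1)
      (a' := 0) (r' := 0) (c' := w) (A' := 0)
end
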